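/- Let 0<γ<1, a≥0 real, T>0, and let k:[0,T]→ℝ be continuously differentiable. For t∈(0,T] define the Riemann–Liouville fractional substantial derivative of order 1−γ by (ˢD_t^{1−γ}k)(t) = (d/dt + a)[ e^{−a t}·(1/Γ(γ)) ∫₀ᵗ (t−s)^{γ−1} e^{a s} k(s) ds ]. Then ∫₀ᵀ (ˢD_t^{1−γ}k)(t)·k(t) dt ≥ 0. -/

import Mathlib

open Real MeasureTheory intervalIntegral

/-- Riemann–Liouville fractional substantial derivative of order `1−γ` with
parameter `a`:
`(ˢD_t^{1−γ}k)(t) = (d/dt + a)[ e^{−a t}·(1/Γ(γ)) ∫₀ᵗ (t−s)^{γ−1} e^{a s} k(s) ds ]`. -/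
noncomputable def rlSubDerivOneSub (γ a : ℝ) (k : ℝ → ℝ) (t : ℝ) : ℝ :=
  deriv (fun u => Real.exp (-(a * u)) *
      ((1 / Real.Gamma γ) * ∫ s in (0:ℝ)..u, (u - s) ^ (γ - 1) * (Real.exp (a * s) * k s))) t
    + a * (Real.exp (-(a * t)) *
      ((1 / Real.Gamma γ) * ∫ s in (0:ℝ)..t, (t - s) ^ (γ - 1) * (Real.exp (a * s) * k s)))

lemma aux_ker_int (γ : ℝ) (hγ0 : 0 < γ) :
    IntervalIntegrable (fun x : ℝ => (1 - x) ^ (γ - 1)) volume 0 1 := by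
  have h := (intervalIntegral.intervalIntegrable_rpow' (a := 0) (b := 1) (r := γ - 1)
    (by linarith)).comp_sub_left 1
  simpa using h.symm

lemma aux_pointwise (γ : ℝ) (hγ0 : 0 < γ) (hγ1 : γ < 1) (u u' : ℝ → ℝ)
    (hu : ∀ x, HasDerivAt u (u' x) x) (hu' : Continuous u') :
    0 ≤ ∫ x in (0:ℝ)..1, (1 - x) ^ (γ - 1) *
      (u 1 * (γ * u x + x * u' x) - (γ * u x ^ 2 + x * (2 * u x * u' x)) / 2) := by
  have huc : Continuous u := continuous_iff_continuousAt.2 fun x => (hu x).continuousAt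
  have hds : Continuous (dslope u 1) := by
    rw [continuous_iff_continuousAt]
    intro x
    by_cases hx : x = 1
    · subst hx; exact continuousAt_dslope_same.2 (hu 1).differentiableAt
    · exact (continuousAt_dslope_of_ne hx).2 huc.continuousAt
  have hkey : ∀ x, u x - u 1 = (x - 1) * dslope u 1 x := by
    intro x
    have := sub_smul_dslope u 1 x
    simpa [smul_eq_mul] using this.symm
  have hc : ContinuousOn (fun x : ℝ => -(x * ((1 - x) ^ (γ - 1) * (u x - u 1) ^ 2)) / 2)
      (Set.Icc 0 1) := by
    have h1 : Continuous (fun x : ℝ => (1 - x) ^ γ) :=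
      (continuous_const.sub continuous_id).rpow_const (fun x => Or.inr hγ0.le)
    have h2 : Continuous (fun x : ℝ => (x * ((1 - x) ^ γ * dslope u 1 x * (u x - u 1))) / 2) := by
      fun_prop
    refine h2.continuousOn.congr ?_
    intro x hx
    rcases eq_or_lt_of_le hx.2 with h | h
    · subst h; simp
    · have : (1 - x) ^ γ = (1 - x) ^ (γ - 1) * (1 - x) := by
        rw [← Real.rpow_add_one (by linarith)]; ring_nf
      simp only
      rw [this, hkey x]; ring
  have hint : IntegrableOn (fun x : ℝ => (1 - x) ^ (γ - 1) *
      (u 1 * (γ * u x + x * u' x) - (γ * u x ^ 2 + x * (2 * u x * u' x)) / 2)) (Set.Icc 0 1) := by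
    rw [integrableOn_Icc_iff_integrableOn_Ioc,
      ← intervalIntegrable_iff_integrableOn_Ioc_of_le zero_le_one]
    apply (aux_ker_int γ hγ0).mul_continuousOn
    apply Continuous.continuousOn
    fun_prop
  have := sub_le_integral_of_hasDeriv_right_of_le
    (g' := fun x => -(1 * ((1 - x) ^ (γ - 1) * (u x - u 1) ^ 2) +
      x * (((-1) * (γ - 1) * (1 - x) ^ (γ - 1 - 1)) * (u x - u 1) ^ 2 +
        (1 - x) ^ (γ - 1) * (2 * (u x - u 1) * u' x))) / 2)
    zero_le_one hc ?_ hint ?_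
  · simpa using this
  · intro x hx
    have h1 : HasDerivAt (fun x : ℝ => (1 - x) ^ (γ - 1))
        ((-1) * (γ - 1) * (1 - x) ^ (γ - 1 - 1)) x :=
      ((hasDerivAt_id x).const_sub 1).rpow_const (Or.inl (by have := hx.2; simp; linarith))
    have h2 : HasDerivAt (fun x : ℝ => (u x - u 1) ^ 2) (2 * (u x - u 1) * u' x) x := by
      have h := ((hu x).sub_const (u 1)).pow 2
      norm_num at h
      exact h
    exact ((((hasDerivAt_id x).mul (h1.mul h2)).neg).div_const 2).hasDerivWithinAt
  · intro x hx
    have hx1 : 0 < 1 - x := by linarith [hx.2]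
    have e : (1 - x) ^ (γ - 1) = (1 - x) ^ (γ - 1 - 1) * (1 - x) := by
      rw [← Real.rpow_add_one hx1.ne']; ring_nf
    have hp : 0 ≤ (1 - x) ^ (γ - 1 - 1) := Real.rpow_nonneg hx1.le _
    rw [e, ← sub_nonneg]
    have : (0:ℝ) ≤ (1 - x) ^ (γ - 1 - 1) * ((1 - γ) * (u x - u 1) ^ 2 / 2 + 
       (1 - x) * γ * u 1 ^ 2 / 2) := by
      have := sub_pos.2 hγ1
      positivity
    refine this.trans_eq ?_
    ring

lemma aux_H (γ : ℝ) (hγ0 : 0 < γ) (w w' : ℝ → ℝ)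
    (hw : ∀ x, HasDerivAt w (w' x) x) (hw' : Continuous w') (t : ℝ) :
    HasDerivAt (fun u => ∫ x in (0:ℝ)..1, (1 - x) ^ (γ - 1) * w (u * x))
      (∫ x in (0:ℝ)..1, (1 - x) ^ (γ - 1) * (x * w' (t * x))) t := by
  have hwc : Continuous w := continuous_iff_continuousAt.2 fun x => (hw x).continuousAt
  have hF : ∀ u, IntervalIntegrable (fun x : ℝ => (1 - x) ^ (γ - 1) * w (u * x)) volume 0 1 := 
    fun u => (aux_ker_int γ hγ0).mul_continuousOn (by fun_prop)
  have hF' : IntervalIntegrable (fun x : ℝ => (1 - x) ^ (γ - 1) * (x * w' (t * x))) volume 0 1 := 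
    (aux_ker_int γ hγ0).mul_continuousOn (by fun_prop)
  obtain ⟨C, hC⟩ := (isCompact_closedBall (0:ℝ) (|t| + 1)).exists_bound_of_continuousOn
    hw'.continuousOn
  refine (intervalIntegral.hasDerivAt_integral_of_dominated_loc_of_deriv_le
    (F := fun u x => (1 - x) ^ (γ - 1) * w (u * x))
    (F' := fun u x => (1 - x) ^ (γ - 1) * (x * w' (u * x)))
    (bound := fun x => (1 - x) ^ (γ - 1) * C)
    (Metric.ball_mem_nhds t one_pos) ?_ (hF t) ?_ ?_ ?_ ?_).2
  · exact Filter.Eventually.of_forall fun u => (hF u).def'.aestronglyMeasurable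
  · exact hF'.def'.aestronglyMeasurable
  · refine Filter.Eventually.of_forall fun x hx u hu => ?_
    rw [Set.uIoc_of_le zero_le_one] at hx
    have h0 : 0 ≤ (1 - x) ^ (γ - 1) := Real.rpow_nonneg (by linarith [hx.2]) _
    rw [norm_mul, Real.norm_of_nonneg h0, norm_mul, Real.norm_of_nonneg hx.1.le]
    have hu2 : |u| ≤ |t| + 1 := by
      rw [Metric.mem_ball, Real.dist_eq] at hu
      have := abs_sub_abs_le_abs_sub u t
      linarith
    have hb := hC (u * x) (by
      rw [mem_closedBall_zero_iff, norm_mul, Real.norm_of_nonneg hx.1.le, Real.norm_eq_abs]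
      nlinarith [hx.2, hx.1, abs_nonneg u])
    gcongr
    have := norm_nonneg (w' (u * x))
    nlinarith [hx.1, hx.2]
  · exact (aux_ker_int γ hγ0).mul_const C
  · refine Filter.Eventually.of_forall fun x hx u hu => ?_
    have := ((hw (u * x)).comp u ((hasDerivAt_id u).mul_const x)).const_mul ((1 - x) ^ (γ - 1))
    refine this.congr_deriv ?_
    ring

lemma aux_scale (γ : ℝ) (hγ0 : 0 < γ) (w : ℝ → ℝ) (u : ℝ) (hu : 0 ≤ u) :
    ∫ s in (0:ℝ)..u, (u - s) ^ (γ - 1) * w s =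
      u ^ γ * ∫ x in (0:ℝ)..1, (1 - x) ^ (γ - 1) * w (u * x) := by
  rcases eq_or_lt_of_le hu with h | h
  · subst h; simp [Real.zero_rpow hγ0.ne']
  · have h1 := intervalIntegral.mul_integral_comp_mul_left (a := 0) (b := 1)
      (f := fun s => (u - s) ^ (γ - 1) * w s) u
    simp only [mul_zero, mul_one] at h1
    rw [← h1]
    have : u ^ γ = u * u ^ (γ - 1) := by
      rw [mul_comm, ← Real.rpow_add_one h.ne']; ring_nf
    rw [this, mul_assoc, ← intervalIntegral.integral_const_mul (u ^ (γ - 1))]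
    congr 1
    apply intervalIntegral.integral_congr
    intro x hx
    rw [Set.uIcc_of_le zero_le_one] at hx
    simp only
    rw [← mul_assoc, ← Real.mul_rpow hu (by linarith [hx.2])]
    ring_nf

lemma aux_deriv (γ : ℝ) (hγ0 : 0 < γ) (w w' : ℝ → ℝ)
    (hw : ∀ x, HasDerivAt w (w' x) x) (hw' : Continuous w') (t : ℝ) (ht : 0 < t) :
    HasDerivAt (fun u => ∫ s in (0:ℝ)..u, (u - s) ^ (γ - 1) * w s)
      (t ^ (γ - 1) * ∫ x in (0:ℝ)..1, (1 - x) ^ (γ - 1) *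
        (γ * w (t * x) + x * (t * w' (t * x)))) t := by
  have hwc : Continuous w := continuous_iff_continuousAt.2 fun x => (hw x).continuousAt
  have h1 := (Real.hasDerivAt_rpow_const (p := γ) (Or.inl ht.ne')).mul (aux_H γ hγ0 w w' hw hw' t)
  have h2 : HasDerivAt (fun u => ∫ s in (0:ℝ)..u, (u - s) ^ (γ - 1) * w s) (γ * t ^ (γ - 1) * (∫ x in (0:ℝ)..1, (1 - x) ^ (γ - 1) * w (t * x)) +
      t ^ γ * ∫ x in (0:ℝ)..1, (1 - x) ^ (γ - 1) * (x * w' (t * x))) t := by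
    refine h1.congr_of_eventuallyEq ?_
    filter_upwards [lt_mem_nhds ht] with u hu
    exact aux_scale γ hγ0 w u hu.le
  convert h2 using 1
  have : t ^ γ = t ^ (γ - 1) * t := by
      rw [← Real.rpow_add_one ht.ne']; ring_nf
  rw [this]
  have hF : IntervalIntegrable (fun x : ℝ => (1 - x) ^ (γ - 1) * w (t * x)) volume 0 1 := 
    (aux_ker_int γ hγ0).mul_continuousOn (by fun_prop)
  have hF' : IntervalIntegrable (fun x : ℝ => (1 - x) ^ (γ - 1) * (x * w' (t * x))) volume 0 1 := 
    (aux_ker_int γ hγ0).mul_continuousOn (by fun_prop)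
  have e : ∀ x : ℝ, (1 - x) ^ (γ - 1) * (γ * w (t * x) + x * (t * w' (t * x))) =
    γ * ((1 - x) ^ (γ - 1) * w (t * x)) + t * ((1 - x) ^ (γ - 1) * (x * w' (t * x))) := by
    intro x; ring
  simp_rw [e]
  rw [intervalIntegral.integral_add (hF.const_mul _) (hF'.const_mul _),
    intervalIntegral.integral_const_mul, intervalIntegral.integral_const_mul]
  ring

lemma aux_main (γ a T : ℝ) (hγ0 : 0 < γ) (hγ1 : γ < 1) (ha : 0 ≤ a) (hT : 0 < T)
    (k k' : ℝ → ℝ) (hk : ∀ x, HasDerivAt k (k' x) x) (hk' : Continuous k')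
    (φ : ℝ → ℝ) (hφ : IntegrableOn φ (Set.Icc 0 T))
    (hφk : ∀ t ∈ Set.Ioo 0 T, φ t = rlSubDerivOneSub γ a k t * k t) :
    0 ≤ ∫ t in (0:ℝ)..T, φ t := by
  have hkc : Continuous k := continuous_iff_continuousAt.2 fun x => (hk x).continuousAt
  have hG : 0 < Real.Gamma γ := Real.Gamma_pos_of_pos hγ0
  have hexp : ∀ c x : ℝ, HasDerivAt (fun s => Real.exp (c * s)) (Real.exp (c * x) * c) x := by
    intro c x
    simpa using ((hasDerivAt_id x).const_mul c).exp
  set w : ℝ → ℝ := fun s => Real.exp (a * s) * k s with hwdef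
  set w' : ℝ → ℝ := fun s => Real.exp (a * s) * a * k s + Real.exp (a * s) * k' s with hw'def
  have hw : ∀ x, HasDerivAt w (w' x) x := fun x => (hexp a x).mul (hk x)
  have hw' : Continuous w' := by fun_prop
  have hwc : Continuous w := by fun_prop
  have hv : ∀ x, HasDerivAt (fun s => w s ^ 2) (2 * w x * w' x) x := by
    intro x
    have h := (hw x).pow 2
    norm_num at h
    exact h
  have hv' : Continuous (fun x => 2 * w x * w' x) := by fun_prop
  set F : ℝ → ℝ := fun u => ∫ s in (0:ℝ)..u, (u - s) ^ (γ - 1) * w s ^ 2 with hFdef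
  have hF0 : ∀ u, 0 ≤ u → 0 ≤ F u := by
    intro u hu
    apply intervalIntegral.integral_nonneg hu
    intro s hs
    exact mul_nonneg (Real.rpow_nonneg (by linarith [hs.2]) _) (sq_nonneg _)
  have hFc : ContinuousOn F (Set.Icc 0 T) := by
    have h1 : Continuous (fun u => ∫ x in (0:ℝ)..1, (1 - x) ^ (γ - 1) * w (u * x) ^ 2) :=
      continuous_iff_continuousAt.2 fun x => (aux_H γ hγ0 _ _ hv hv' x).continuousAt
    have h2 : Continuous (fun u : ℝ => u ^ γ) :=
      continuous_id.rpow_const (fun x => Or.inr hγ0.le)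
    refine (h2.mul h1).continuousOn.congr ?_
    intro u hu
    exact aux_scale γ hγ0 (fun s => w s ^ 2) u hu.1
  set c : ℝ := 1 / Real.Gamma γ with hc
  have hc0 : 0 < c := by positivity
  set DF : ℝ → ℝ := fun t => (t ^ (γ - 1) * ∫ x in (0:ℝ)..1, (1 - x) ^ (γ - 1) *
        (γ * w (t * x) ^ 2 + x * (t * (2 * w (t * x) * w' (t * x))))) with hDF
  have key := sub_le_integral_of_hasDeriv_right_of_le
    (g := fun t => Real.exp (-(2 * a) * t) * F t * (c / 2))
    (g' := fun t => (Real.exp (-(2 * a) * t) * (-(2 * a)) * F t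
      + Real.exp (-(2 * a) * t) * DF t) * (c / 2))
    hT.le ?_ ?_ hφ ?_
  · have h0 : F 0 = 0 := by simp [hFdef]
    have h1 : 0 ≤ Real.exp (-(2 * a) * T) * F T * (c / 2) := by
      have := hF0 T hT.le
      positivity
    simp only [h0] at key
    linarith
  · exact ((Continuous.continuousOn (by fun_prop)).mul hFc).mul continuousOn_const
  · intro t ht
    exact (((hexp _ t).mul (aux_deriv γ hγ0 _ _ hv hv' t ht.1)).mul_const _).hasDerivWithinAt
  · intro t ht
    rw [hφk t ht]
    have hD := aux_deriv γ hγ0 w w' hw hw' t ht.1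
    set DG := (t ^ (γ - 1) * ∫ x in (0:ℝ)..1, (1 - x) ^ (γ - 1) *
        (γ * w (t * x) + x * (t * w' (t * x)))) with hDG
    have hval : rlSubDerivOneSub γ a k t = Real.exp (-(a * t)) * (c * DG) := by
      have h3 := (hexp (-a) t).mul (hD.const_mul c)
      have h4 : HasDerivAt (fun u => Real.exp (-(a * u)) *
        (c * ∫ s in (0:ℝ)..u, (u - s) ^ (γ - 1) * (Real.exp (a * s) * k s))) (Real.exp (-(a * t)) * -a * (c * ∫ s in (0:ℝ)..t, (t - s) ^ (γ - 1) * w s)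
          + Real.exp (-(a * t)) * (c * DG)) t := by
        simp only [neg_mul] at h3
        refine HasDerivAt.congr_deriv h3 ?_
        ring
      unfold rlSubDerivOneSub
      rw [← hc, h4.deriv]
      ring
    have hpt : DF t / 2 ≤ w t * DG := by
      have hu : ∀ x, HasDerivAt (fun x => w (t * x)) (t * w' (t * x)) x := by
        intro x
        have := (hw (t * x)).comp x ((hasDerivAt_id x).const_mul t)
        refine this.congr_deriv ?_
        simp
        ring
      have h := aux_pointwise γ hγ0 hγ1 _ _ hu (by fun_prop)
      simp only [mul_one] at h
      have i1 : IntervalIntegrable (fun x : ℝ => (1 - x) ^ (γ - 1) *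
        (γ * w (t * x) + x * (t * w' (t * x)))) volume 0 1 := 
        (aux_ker_int γ hγ0).mul_continuousOn (by fun_prop)
      have i2 : IntervalIntegrable (fun x : ℝ => (1 - x) ^ (γ - 1) *
        (γ * w (t * x) ^ 2 + x * (t * (2 * w (t * x) * w' (t * x))))) volume 0 1 := 
        (aux_ker_int γ hγ0).mul_continuousOn (by fun_prop)
      have e : ∀ x : ℝ, (1 - x) ^ (γ - 1) * (w t * (γ * w (t * x) + x * (t * w' (t * x))) -
          (γ * w (t * x) ^ 2 + x * (2 * w (t * x) * (t * w' (t * x)))) / 2) =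
          w t * ((1 - x) ^ (γ - 1) * (γ * w (t * x) + x * (t * w' (t * x)))) -
          (1 / 2) * ((1 - x) ^ (γ - 1) *
        (γ * w (t * x) ^ 2 + x * (t * (2 * w (t * x) * w' (t * x))))) := by
        intro x; ring
      simp_rw [e] at h
      rw [intervalIntegral.integral_sub (i1.const_mul _) (i2.const_mul _),
        intervalIntegral.integral_const_mul, intervalIntegral.integral_const_mul] at h
      have hp : 0 ≤ t ^ (γ - 1) := Real.rpow_nonneg ht.1.le _
      have := mul_nonneg hp h
      simp only [hDF, hDG]
      linarith
    have hkw : k t = Real.exp (-(a * t)) * w t := by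
      simp only [hwdef]
      rw [← mul_assoc, ← Real.exp_add]; simp
    have he : Real.exp (-(2 * a) * t) = Real.exp (-(a * t)) * Real.exp (-(a * t)) := by
      rw [← Real.exp_add]; ring_nf
    rw [hval, hkw]
    have hE : 0 < Real.exp (-(2 * a) * t) := Real.exp_pos _
    have h5 : Real.exp (-(a * t)) * (c * DG) * (Real.exp (-(a * t)) * w t) =
      Real.exp (-(2 * a) * t) * c * (w t * DG) := by rw [he]; ring
    rw [h5]
    have h6 := mul_le_mul_of_nonneg_left hpt (mul_pos hE hc0).le
    have h7 : 0 ≤ Real.exp (-(2 * a) * t) * c * (a * F t) := by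
      have := hF0 t ht.1.le
      positivity
    linarith

/-- positivity of the Riemann–Liouville fractional substantial derivative:
for `0 < γ < 1`, `a ≥ 0`, `T > 0` and `k` continuously differentiable on `[0,T]`,
`∫₀ᵀ (ˢD_t^{1−γ}k)(t)·k(t) dt ≥ 0`. -/
theorem rl_substantial_derivative_positivity
    (γ a T : ℝ) (hγ0 : 0 < γ) (hγ1 : γ < 1) (ha : 0 ≤ a) (hT : 0 < T)
    (k : ℝ → ℝ) (hk : ContDiffOn ℝ 1 k (Set.Icc 0 T)) :
    0 ≤ ∫ t in (0:ℝ)..T, rlSubDerivOneSub γ a k t * k t := by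
  by_cases hint : IntervalIntegrable (fun t => rlSubDerivOneSub γ a k t * k t) volume 0 T
  swap
  · rw [intervalIntegral.integral_undef hint]
  rw [intervalIntegrable_iff_integrableOn_Ioc_of_le hT.le,
    ← integrableOn_Icc_iff_integrableOn_Ioc] at hint
  have hd : ContinuousOn (derivWithin k (Set.Icc 0 T)) (Set.Icc 0 T) :=
    hk.continuousOn_derivWithin (uniqueDiffOn_Icc hT) le_rfl
  set p : ℝ → ℝ := Set.IccExtend hT.le ((Set.Icc 0 T).domRestrict (derivWithin k (Set.Icc 0 T)))
    with hp
  have hpc : Continuous p := (continuousOn_iff_continuous_domRestrict.1 hd).Icc_extend'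
  set K : ℝ → ℝ := fun t => k 0 + ∫ s in (0:ℝ)..t, p s with hK
  have hKd : ∀ x, HasDerivAt K (p x) x := fun x =>
    (hpc.integral_hasStrictDerivAt 0 x).hasDerivAt.const_add _
  have hKk : ∀ t ∈ Set.Icc 0 T, k t = K t := by
    intro t ht
    have h := integral_eq_sub_of_hasDerivAt_of_le (f := k) (f' := p) ht.1
      (hk.continuousOn.mono (Set.Icc_subset_Icc_right ht.2)) ?_ (hpc.intervalIntegrable _ _)
    · simp only [hK]; rw [h]; ring
    · intro x hx
      have hx' : x ∈ Set.Icc 0 T := ⟨hx.1.le, hx.2.le.trans ht.2⟩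
      have h1 : p x = derivWithin k (Set.Icc 0 T) x := by
        simp [hp, Set.IccExtend_of_mem _ _ hx']
      rw [h1]
      exact ((hk.differentiableOn one_ne_zero x hx').hasDerivWithinAt).hasDerivAt
        (Icc_mem_nhds hx.1 (hx.2.trans_le ht.2))
  refine aux_main γ a T hγ0 hγ1 ha hT K p hKd hpc _ hint ?_
  intro t ht
  have hI : ∀ u ∈ Set.Icc 0 T, ∫ s in (0:ℝ)..u, (u - s) ^ (γ - 1) * (Real.exp (a * s) * k s) =
      ∫ s in (0:ℝ)..u, (u - s) ^ (γ - 1) * (Real.exp (a * s) * K s) := by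
    intro u hu
    apply intervalIntegral.integral_congr
    intro s hs
    rw [Set.uIcc_of_le hu.1] at hs
    simp only
    rw [hKk s ⟨hs.1, hs.2.trans hu.2⟩]
  have ht' := Set.Ioo_subset_Icc_self ht
  rw [hKk t ht']
  congr 1
  unfold rlSubDerivOneSub
  rw [hI t ht']
  congr 1
  apply Filter.EventuallyEq.deriv_eq
  filter_upwards [Ioo_mem_nhds ht.1 ht.2] with u hu
  rw [hI u (Set.Ioo_subset_Icc_self hu)]
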